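/- arXiv:1606.02206 — 5 statements merged into one kernel-verified Lean document; each statement's English description precedes it below -/
import Mathlib

section
/- (Weak version of the minimax theorem for robust Bayes rules.) Suppose 𝒳 and 𝒴 are finite sets, Γ is a convex and closed set of joint probability distributions on 𝒳 × 𝒴, the loss function L : 𝒴 × 𝒜 → [0,∞) is bounded by a constant C, and the risk set S = { (L(y,a))_{y∈𝒴} : a ∈ 𝒜 } is a closed subset of ℝ^{|𝒴|}. Then there exists a randomized decision rule ψ* that is a robust Bayes decision rule against Γ, and ψ* is a Bayes decision rule for some distribution P* ∈ Γ that maximizes the conditional entropy H(Y|X) over Γ. -/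
/-!
The loss vectors `(L(y,ζ))_y` of randomized acts `ζ` form exactly the convex hull `K` of the risk
set: an average lies in any closed convex set containing the averaged values
(`actLoss_mem_convexHull`), and a convex combination of pure loss vectors is the loss vector of the
corresponding mixture (`exists_act_of_mem_convexHull`). The risk set is closed and bounded, hence
compact, and by Carathéodory's theorem so is `K` (`IsCompact.convexHull_of_finiteDimensional`).

A decision rule is thus, as far as losses are concerned, a point `r` of the compact convex set
`K^𝒳`, and its expected loss `∑ P(x,y) r(x,y)` is bilinear in `(r, P)`. As `Γ` is compact and convex,
Sion's minimax theorem yields a saddle point `(r*, P*)` (`exists_saddle`). Any rule `ψ*` with loss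
vectors `r*` is then robust Bayes; replacing `r*` in a single coordinate `x` shows that it is Bayes
for `P*` conditionally on each `x`; and `H(Y|X)` under `P` is at most the loss of `ψ*` under `P`,
which is at most the loss of `ψ*` under `P*`, that is, the entropy under `P*`.
-/

open MeasureTheory

/-- The loss `L(y,ζ)` of a randomized act `ζ` (a probability measure on actions):
`L(y,ζ) = E_{A∼ζ}[L(y,A)]`. -/
noncomputable def actLoss {Y A : Type*} [MeasurableSpace A]
    (L : Y → A → ℝ) (y : Y) (ζ : Measure A) : ℝ :=
  ∫ a, L y a ∂ζ

/-- A randomized decision rule assigns a probability measure on actions to each `x`. -/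
def IsRandRule {X A : Type*} [MeasurableSpace A] (ψ : X → Measure A) : Prop :=
  ∀ x, IsProbabilityMeasure (ψ x)

/-- Expected loss `E_P[L(Y, ψ(X))]` of a randomized decision rule `ψ` under the joint
distribution `P` on finite `𝒳 × 𝒴`. -/
noncomputable def expLoss {X Y A : Type*} [Fintype X] [Fintype Y] [MeasurableSpace A]
    (L : Y → A → ℝ) (P : X → Y → ℝ) (ψ : X → Measure A) : ℝ :=
  ∑ x, ∑ y, P x y * actLoss L y (ψ x)

/-- The generalized conditional entropy
`H(Y|X) = ∑_x P_X(x) · inf_ζ E[L(Y,ζ)|X=x]`, written in the equivalent unnormalized form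
`∑_x inf_ζ ∑_y P(x,y) L(y,ζ)`, the infimum running over randomized acts. -/
noncomputable def condEnt {X Y A : Type*} [Fintype X] [Fintype Y] [MeasurableSpace A]
    (L : Y → A → ℝ) (P : X → Y → ℝ) : ℝ :=
  ∑ x, ⨅ ζ : {m : Measure A // IsProbabilityMeasure m}, ∑ y, P x y * actLoss L y ζ.1

/-- In finite dimension, the convex hull of a compact set is compact: by Carathéodory's theorem it
is a finite union of continuous images of `stdSimplex × s^k`, with `k ≤ dim E + 1`. -/
theorem IsCompact.convexHull_of_finiteDimensional {E : Type*} [NormedAddCommGroup E]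
    [NormedSpace ℝ E] [FiniteDimensional ℝ E] {s : Set E} (hs : IsCompact s) :
    IsCompact (convexHull ℝ s) := by
  have key : convexHull ℝ s = ⋃ k ∈ Set.Iic (Module.finrank ℝ E + 1),
      (fun p : (Fin k → ℝ) × (Fin k → E) => ∑ i, p.1 i • p.2 i) ''
        (stdSimplex ℝ (Fin k) ×ˢ Set.univ.pi fun _ => s) := by
    apply Set.Subset.antisymm
    · intro x hx
      obtain ⟨ι, _, z, w, hz, hind, hw, hw1, hx⟩ := eq_pos_convex_span_of_mem_convexHull hx
      have hcard : Fintype.card ι ≤ Module.finrank ℝ E + 1 :=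
        hind.card_le_finrank_succ.trans
          (Nat.add_le_add_right (Submodule.finrank_le _) 1)
      let e := (Fintype.equivFin ι).symm
      refine Set.mem_biUnion (x := Fintype.card ι) hcard
        ⟨(w ∘ e, z ∘ e), ⟨⟨fun i => (hw _).le, ?_⟩, fun i _ => hz ⟨_, rfl⟩⟩, ?_⟩
      · simpa using (Equiv.sum_comp e w).trans hw1
      · simpa using (Equiv.sum_comp e fun i => w i • z i).trans hx
    · refine Set.iUnion₂_subset fun k _ => ?_
      rintro _ ⟨⟨w, z⟩, ⟨⟨hw0, hw1⟩, hz⟩, rfl⟩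
      exact (convex_convexHull ℝ s).sum_mem (fun i _ => hw0 i) hw1
        fun i _ => subset_convexHull ℝ s (hz i trivial)
  rw [key]
  refine (Set.finite_Iic _).isCompact_biUnion fun k _ => ?_
  refine ((isCompact_stdSimplex ℝ (Fin k)).prod (isCompact_univ_pi fun _ => hs)).image ?_
  fun_prop

section Acts

variable {Y A : Type*} {L : Y → A → ℝ} {C : ℝ}

theorem integrable_loss [MeasurableSpace A] (hL0 : ∀ y a, 0 ≤ L y a) (hLC : ∀ y a, L y a ≤ C)
    (hLm : ∀ y, Measurable (L y)) (ζ : Measure A) [IsFiniteMeasure ζ] (y : Y) :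
    Integrable (L y) ζ :=
  Integrable.of_bound (hLm y).aestronglyMeasurable C
    (Filter.Eventually.of_forall fun a => by
      rw [Real.norm_of_nonneg (hL0 y a)]; exact hLC y a)

theorem isCompact_risk (hL0 : ∀ y a, 0 ≤ L y a) (hLC : ∀ y a, L y a ≤ C)
    (hrisk : IsClosed {v : Y → ℝ | ∃ a : A, v = fun y => L y a}) :
    IsCompact {v : Y → ℝ | ∃ a : A, v = fun y => L y a} := by
  refine (isCompact_Icc (a := fun _ : Y => (0 : ℝ)) (b := fun _ => C)).of_isClosed_subset hrisk ?_
  rintro _ ⟨a, rfl⟩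
  exact ⟨fun y => hL0 y a, fun y => hLC y a⟩

theorem actLoss_mem_convexHull [Fintype Y] [MeasurableSpace A] (hL0 : ∀ y a, 0 ≤ L y a) (hLC : ∀ y a, L y a ≤ C)
    (hLm : ∀ y, Measurable (L y))
    (hrisk : IsClosed {v : Y → ℝ | ∃ a : A, v = fun y => L y a})
    (ζ : Measure A) [IsProbabilityMeasure ζ] :
    (fun y => actLoss L y ζ) ∈ convexHull ℝ {v : Y → ℝ | ∃ a : A, v = fun y => L y a} := by
  have hint : Integrable (fun a y => L y a) ζ :=
    Integrable.of_eval fun y => integrable_loss hL0 hLC hLm ζ y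
  have hmem := (convex_convexHull ℝ {v : Y → ℝ | ∃ a : A, v = fun y => L y a}).integral_mem
    (isCompact_risk hL0 hLC hrisk).convexHull_of_finiteDimensional.isClosed
    (Filter.Eventually.of_forall fun a => subset_convexHull ℝ _ ⟨a, rfl⟩) hint
  convert hmem using 1
  ext y
  rw [eval_integral fun y => integrable_loss hL0 hLC hLm ζ y]
  rfl

theorem exists_act_of_mem_convexHull [MeasurableSpace A] (hL0 : ∀ y a, 0 ≤ L y a) (hLC : ∀ y a, L y a ≤ C)
    (hLm : ∀ y, Measurable (L y)) {v : Y → ℝ}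
    (hv : v ∈ convexHull ℝ {v : Y → ℝ | ∃ a : A, v = fun y => L y a}) :
    ∃ ζ : Measure A, IsProbabilityMeasure ζ ∧ ∀ y, actLoss L y ζ = v y := by
  refine convexHull_min
    (t := {v | ∃ ζ : Measure A, IsProbabilityMeasure ζ ∧ ∀ y, actLoss L y ζ = v y}) ?_ ?_ hv
  · rintro _ ⟨a, rfl⟩
    exact ⟨Measure.dirac a, inferInstance,
      fun y => integral_dirac' _ _ (hLm y).stronglyMeasurable⟩
  · rintro v₁ ⟨ζ₁, h₁, hv₁⟩ v₂ ⟨ζ₂, h₂, hv₂⟩ s t hs ht hst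
    have hp : IsProbabilityMeasure (ENNReal.ofReal s • ζ₁ + ENNReal.ofReal t • ζ₂) := by
      constructor
      simp [← ENNReal.ofReal_add hs ht, hst]
    refine ⟨_, hp, fun y => ?_⟩
    have i₁ := (integrable_loss hL0 hLC hLm ζ₁ y).smul_measure (ENNReal.ofReal_ne_top (r := s))
    have i₂ := (integrable_loss hL0 hLC hLm ζ₂ y).smul_measure (ENNReal.ofReal_ne_top (r := t))
    have e₁ := hv₁ y
    have e₂ := hv₂ y
    unfold actLoss at e₁ e₂ ⊢
    rw [integral_add_measure i₁ i₂, integral_smul_measure, integral_smul_measure, e₁, e₂]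
    simp [ENNReal.toReal_ofReal hs, ENNReal.toReal_ofReal ht]

theorem actLoss_nonneg [MeasurableSpace A] (hL0 : ∀ y a, 0 ≤ L y a) (y : Y) (ζ : Measure A) : 0 ≤ actLoss L y ζ :=
  integral_nonneg (hL0 y)

theorem actLoss_le [MeasurableSpace A] (hL0 : ∀ y a, 0 ≤ L y a) (hLC : ∀ y a, L y a ≤ C)
    (hLm : ∀ y, Measurable (L y)) (y : Y) (ζ : Measure A) [IsProbabilityMeasure ζ] :
    actLoss L y ζ ≤ C := by
  have h := integral_mono (integrable_loss hL0 hLC hLm ζ y) (integrable_const C) (hLC y)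
  simpa [actLoss] using h

end Acts

/-- The minimax theorem for the pairing `∑ P(x,y) r(x,y)` on compact convex sets of matrices. -/
theorem exists_saddle {X Y : Type*} [Fintype X] [Fintype Y] {R Γ : Set (X → Y → ℝ)}
    (hRn : R.Nonempty) (hRc : Convex ℝ R) (hRk : IsCompact R)
    (hΓn : Γ.Nonempty) (hΓc : Convex ℝ Γ) (hΓk : IsCompact Γ) :
    ∃ r ∈ R, ∃ P ∈ Γ, ∀ r' ∈ R, ∀ P' ∈ Γ,
      ∑ x, ∑ y, P' x y * r x y ≤ ∑ x, ∑ y, P x y * r' x y := by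
  have lin₁ (P : X → Y → ℝ) : IsLinearMap ℝ fun r : X → Y → ℝ => ∑ x, ∑ y, P x y * r x y :=
    ⟨fun r r' => by simp [mul_add, Finset.sum_add_distrib],
      fun c r => by simp [Finset.mul_sum, mul_left_comm]⟩
  have lin₂ (r : X → Y → ℝ) : IsLinearMap ℝ fun P : X → Y → ℝ => ∑ x, ∑ y, P x y * r x y :=
    ⟨fun P P' => by simp [add_mul, Finset.sum_add_distrib],
      fun c P => by simp [Finset.mul_sum, mul_assoc]⟩
  refine Sion.exists_isSaddlePointOn (f := fun r P => ∑ x, ∑ y, P x y * r x y)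
    hRn hRc hRk (fun P _ => ?_) (fun P _ => ?_) hΓc hΓn hΓk (fun r _ => ?_) (fun r _ => ?_)
  · exact (Continuous.lowerSemicontinuous (by fun_prop)).lowerSemicontinuousOn _
  · exact ((lin₁ P).mk' _ |>.convexOn hRc).quasiconvexOn
  · exact (Continuous.upperSemicontinuous (by fun_prop)).upperSemicontinuousOn _
  · exact ((lin₂ r).mk' _ |>.concaveOn hΓc).quasiconcaveOn

/-- **Weak version of the minimax theorem for robust Bayes rules.**
Suppose `𝒳, 𝒴` are finite, `Γ` is a convex closed set of joint distributions on `𝒳 × 𝒴`,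
the loss `L : 𝒴 × 𝒜 → [0,∞)` is bounded by `C`, and the risk set
`S = {(L(y,a))_{y∈𝒴} : a ∈ 𝒜} ⊆ ℝ^𝒴` is closed. Then there exist a randomized decision rule
`ψ*` and a conditional-entropy-maximizing distribution `P* ∈ Γ` such that `ψ*` is a robust Bayes
decision rule against `Γ` (it minimizes the worst-case expected loss `sup_{P∈Γ} E_P[L(Y,ψ(X))]`)
and `ψ*` is a Bayes decision rule for `P*`. -/
theorem weak_minimax_robust_bayes
    {X Y A : Type*} [Fintype X] [Fintype Y] [Nonempty X] [Nonempty Y]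
    [MeasurableSpace A] [Nonempty A]
    (L : Y → A → ℝ) (hL0 : ∀ y a, 0 ≤ L y a)
    (C : ℝ) (hLC : ∀ y a, L y a ≤ C)
    (hLm : ∀ y, Measurable (L y))
    (Γ : Set (X → Y → ℝ))
    (hΓ : ∀ P ∈ Γ, (∀ x y, 0 ≤ P x y) ∧ ∑ x, ∑ y, P x y = 1)
    (hconv : Convex ℝ Γ) (hclosed : IsClosed Γ) (hne : Γ.Nonempty)
    (hrisk : IsClosed {v : Y → ℝ | ∃ a : A, v = fun y => L y a}) :
    ∃ (ψstar : X → Measure A) (Pstar : X → Y → ℝ),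
      IsRandRule ψstar ∧ Pstar ∈ Γ ∧
      (∀ P ∈ Γ, condEnt L P ≤ condEnt L Pstar) ∧
      (∀ ψ' : X → Measure A, IsRandRule ψ' →
        (⨆ P ∈ Γ, expLoss L P ψstar) ≤ ⨆ P ∈ Γ, expLoss L P ψ') ∧
      (∀ ψ' : X → Measure A, IsRandRule ψ' → ∀ x,
        ∑ y, Pstar x y * actLoss L y (ψstar x) ≤ ∑ y, Pstar x y * actLoss L y (ψ' x)) := by
  classical
  set K : Set (Y → ℝ) := convexHull ℝ {v : Y → ℝ | ∃ a : A, v = fun y => L y a} with hK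
  have hKk : IsCompact K := (isCompact_risk hL0 hLC hrisk).convexHull_of_finiteDimensional
  have hKmem (ζ : Measure A) (hζ : IsProbabilityMeasure ζ) : (fun y => actLoss L y ζ) ∈ K :=
    actLoss_mem_convexHull hL0 hLC hLm hrisk ζ
  have hKn : K.Nonempty :=
    ⟨_, subset_convexHull ℝ _ ⟨Classical.arbitrary A, rfl⟩⟩
  have hP1 {P} (hP : P ∈ Γ) (x : X) (y : Y) : P x y ≤ 1 := by
    obtain ⟨h0, h1⟩ := hΓ P hP
    calc P x y ≤ ∑ y, P x y :=
          Finset.single_le_sum (f := fun y => P x y) (fun y _ => h0 x y) (Finset.mem_univ y)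
      _ ≤ ∑ x, ∑ y, P x y :=
          Finset.single_le_sum (f := fun x => ∑ y, P x y)
            (fun x _ => Finset.sum_nonneg fun y _ => h0 x y) (Finset.mem_univ x)
      _ = 1 := h1
  have hΓk : IsCompact Γ :=
    (isCompact_Icc (a := fun (_ : X) (_ : Y) => (0 : ℝ)) (b := fun _ _ => 1)).of_isClosed_subset
      hclosed fun P hP => ⟨fun x y => (hΓ P hP).1 x y, fun x y => hP1 hP x y⟩
  obtain ⟨r, hr, Q, hQ, hsad⟩ := exists_saddle (R := Set.univ.pi fun _ : X => K) (Γ := Γ)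
    (Set.univ_pi_nonempty_iff.2 fun _ => hKn) (convex_pi fun _ _ => convex_convexHull ℝ _)
    (isCompact_univ_pi fun _ => hKk) hne hconv hΓk
  choose ψ hψ hψr using fun x => exists_act_of_mem_convexHull hL0 hLC hLm (hr x trivial)
  have hexp (P : X → Y → ℝ) : expLoss L P ψ = ∑ x, ∑ y, P x y * r x y := by
    simp [expLoss, hψr]
  have hbayes (ζ : Measure A) (hζ : IsProbabilityMeasure ζ) (x : X) :
      ∑ y, Q x y * actLoss L y (ψ x) ≤ ∑ y, Q x y * actLoss L y ζ := by
    -- Compare the saddle point with the rule that deviates from it only at `x`.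
    have h := hsad (Function.update r x fun y => actLoss L y ζ)
      (fun x' _ => by
        by_cases hx : x' = x
        · subst hx; simpa using hKmem ζ hζ
        · simpa [hx] using hr x' trivial) Q hQ
    rw [← Finset.add_sum_erase _ _ (Finset.mem_univ x),
      ← Finset.add_sum_erase _ (fun x' => ∑ y, Q x' y * Function.update r x _ x' y)
        (Finset.mem_univ x)] at h
    have herase : ∑ x' ∈ Finset.univ.erase x,
        ∑ y, Q x' y * Function.update r x (fun y => actLoss L y ζ) x' y =
        ∑ x' ∈ Finset.univ.erase x, ∑ y, Q x' y * r x' y :=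
      Finset.sum_congr rfl fun x' hx' => by
        rw [Function.update_of_ne (Finset.ne_of_mem_erase hx')]
    rw [herase, Function.update_self] at h
    simpa only [hψr, add_le_add_iff_right] using h
  have hexp0 (φ : X → Measure A) {P} (hP : P ∈ Γ) : 0 ≤ expLoss L P φ :=
    Finset.sum_nonneg fun x _ => Finset.sum_nonneg fun y _ =>
      mul_nonneg ((hΓ P hP).1 x y) (actLoss_nonneg hL0 y _)
  have hexpC (φ : X → Measure A) (hφ : IsRandRule φ) {P} (hP : P ∈ Γ) : expLoss L P φ ≤ C := by
    calc expLoss L P φ ≤ ∑ x, ∑ y, P x y * C :=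
          Finset.sum_le_sum fun x _ => Finset.sum_le_sum fun y _ =>
            haveI := hφ x
            mul_le_mul_of_nonneg_left (actLoss_le hL0 hLC hLm y _) ((hΓ P hP).1 x y)
      _ = C := by simp_rw [← Finset.sum_mul]; rw [(hΓ P hP).2, one_mul]
  have hC : 0 ≤ C := (hexp0 ψ hQ).trans (hexpC ψ hψ hQ)
  have hsup (φ : X → Measure A) (hφ : IsRandRule φ) :
      expLoss L Q φ ≤ ⨆ P ∈ Γ, expLoss L P φ := by
    have hbdd : BddAbove (Set.range fun P => ⨆ _ : P ∈ Γ, expLoss L P φ) :=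
      ⟨C, by rintro _ ⟨P, rfl⟩; exact Real.iSup_le (fun hP => hexpC φ hφ hP) hC⟩
    simpa [hQ] using le_ciSup hbdd Q
  refine ⟨ψ, Q, hψ, hQ, fun P hP => ?_, fun φ hφ => ?_, fun φ hφ x => hbayes _ (hφ x) x⟩
  · calc condEnt L P ≤ expLoss L P ψ := by
          refine Finset.sum_le_sum fun x _ => ciInf_le (ι := {m : Measure A //
            IsProbabilityMeasure m}) ⟨0, ?_⟩ ⟨ψ x, hψ x⟩
          rintro _ ⟨ζ, rfl⟩
          exact Finset.sum_nonneg fun y _ =>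
            mul_nonneg ((hΓ P hP).1 x y) (actLoss_nonneg hL0 y _)
      _ ≤ expLoss L Q ψ := by rw [hexp, hexp]; exact hsad r hr P hP
      _ ≤ condEnt L Q := by
          refine Finset.sum_le_sum fun x _ => ?_
          have : Nonempty {m : Measure A // IsProbabilityMeasure m} := ⟨⟨ψ x, hψ x⟩⟩
          exact le_ciInf fun ζ => hbayes ζ.1 ζ.2 x
  · have hle {P} (hP : P ∈ Γ) : expLoss L P ψ ≤ expLoss L Q φ := by
      rw [hexp]
      exact hsad (fun x y => actLoss L y (φ x)) (fun x _ => hKmem _ (hφ x)) P hP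
    -- The inner supremum over an empty index is `0`, so nonnegativity of the losses is needed.
    exact Real.iSup_le (fun P => Real.iSup_le (fun hP => (hle hP).trans (hsup φ hφ))
      ((hexp0 φ hQ).trans (hsup φ hφ))) ((hexp0 φ hQ).trans (hsup φ hφ))
end

section
/- (Closed form of the 0-1 loss conjugate F_θ.) Let t ≥ 1 and z ∈ ℝ^t. Set z̃ := (z_1,…,z_t, 0) ∈ ℝ^{t+1}, and let z̃_{(1)} ≥ z̃_{(2)} ≥ … ≥ z̃_{(t+1)} be its coordinates in descending order. Then max_{p ∈ Δ^{t+1}} ( (1 − max_{1≤i≤t+1} p_i) + Σ_{i=1}^t p_i z_i ) = max_{1 ≤ k ≤ t+1} ( k − 1 + Σ_{j=1}^k z̃_{(j)} ) / k, and the maximum over k is attained at k_max, the largest index k satisfying Σ_{i=1}^k ( z̃_{(i)} − z̃_{(k)} ) < 1. -/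
/-!
Write `w j = z̃ (σ j)` for the sorted vector, `S k` for the sum of its first `k` entries, and
`lam = (S kmax - 1) / kmax`, so that the claimed value is `1 + lam`. The condition at `kmax` says
`lam < w j` for `j < kmax`; its failure at `kmax + 1` says `w j ≤ lam` for `j ≥ kmax`. Hence
`p j * (w j - lam) ≤ M * (w j - lam)⁺` with `M = max p`, and summing,
`∑ p j * w j - lam ≤ M * ∑_{j < kmax} (w j - lam) = M`, which is the upper bound.
The uniform distribution on the `k` largest coordinates has objective value `(k - 1 + S k) / k`
(`exists_uniform_top`); for `k = kmax` this is attainment, and for other `k` the upper bound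
applied to it shows that `kmax` maximises the right-hand side.
-/

open Finset

/-- `z̃ = (z, 0) ∈ ℝ^{t+1}`: the vector `z ∈ ℝ^t` extended by a final zero coordinate. -/
noncomputable def ztil (t : ℕ) (z : Fin t → ℝ) : Fin (t + 1) → ℝ := Fin.snoc z 0

/-- The linear term of the objective, rewritten in the sorted coordinates; the last coordinate of
`z̃` is zero, so it may be included. -/
lemma sum_castSucc_mul_eq (t : ℕ) (z : Fin t → ℝ) (σ : Equiv.Perm (Fin (t + 1)))
    (p : Fin (t + 1) → ℝ) :
    ∑ i : Fin t, p i.castSucc * z i = ∑ j, p (σ j) * ztil t z (σ j) := by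
  rw [Equiv.sum_comp σ (fun i => p i * ztil t z i), Fin.sum_univ_castSucc]
  simp [ztil]

lemma sum_ite_lt_const (n k : ℕ) (hk : k ≤ n) (c : ℝ) :
    (∑ j : Fin n, if (j : ℕ) < k then c else 0) = k * c := by
  rw [Fin.sum_univ_eq_sum_range (fun j => if j < k then c else 0), ← Finset.sum_filter]
  have : (Finset.range n).filter (fun j => j < k) = Finset.range k := by
    ext j; simp only [Finset.mem_filter, Finset.mem_range]; omega
  simp [this]

lemma sum_ite_lt_succ (n k : ℕ) (hk : k < n) (w : Fin n → ℝ) :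
    (∑ j : Fin n, if (j : ℕ) < k + 1 then w j else 0)
      = (∑ j : Fin n, if (j : ℕ) < k then w j else 0) + w ⟨k, hk⟩ := by
  have h : w ⟨k, hk⟩ = ∑ j : Fin n, if j = ⟨k, hk⟩ then w j else 0 := by simp
  rw [h, ← Finset.sum_add_distrib]
  refine Finset.sum_congr rfl fun j _ => ?_
  simp only [Fin.ext_iff]
  split_ifs <;> first | omega | simp

/-- The uniform distribution on the `k` coordinates that `σ` puts first has objective value
`(k - 1 + S k) / k`. -/
lemma exists_uniform_top (t : ℕ) (z : Fin t → ℝ) (σ : Equiv.Perm (Fin (t + 1)))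
    (k : ℕ) (hk1 : 1 ≤ k) (hk2 : k ≤ t + 1) :
    ∃ p : Fin (t + 1) → ℝ, (∀ i, 0 ≤ p i) ∧ (∑ i, p i = 1) ∧
      (1 - ⨆ i, p i) + ∑ i : Fin t, p i.castSucc * z i
        = ((k : ℝ) - 1
            + ∑ j : Fin (t + 1), if (j : ℕ) < k then ztil t z (σ j) else 0) / k := by
  have hk0 : (0 : ℝ) < k := by exact_mod_cast hk1
  have hinv : (0 : ℝ) ≤ (k : ℝ)⁻¹ := by positivity
  refine ⟨fun i => if ((σ.symm i : Fin (t + 1)) : ℕ) < k then (k : ℝ)⁻¹ else 0, ?_, ?_, ?_⟩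
  · intro i
    dsimp only
    split_ifs <;> positivity
  · rw [← Equiv.sum_comp σ]
    simp only [Equiv.symm_apply_apply]
    rw [sum_ite_lt_const _ _ hk2]
    field_simp
  · have hsup : (⨆ i, if ((σ.symm i : Fin (t + 1)) : ℕ) < k then (k : ℝ)⁻¹ else 0)
        = (k : ℝ)⁻¹ := by
      apply le_antisymm
      · refine ciSup_le fun i => ?_
        split_ifs
        · exact le_rfl
        · exact hinv
      · refine le_trans ?_ (le_ciSup (Set.finite_range _).bddAbove (σ 0))
        simp [show 0 < k by omega]
    rw [hsup, sum_castSucc_mul_eq t z σ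
      (fun i => if ((σ.symm i : Fin (t + 1)) : ℕ) < k then (k : ℝ)⁻¹ else 0)]
    simp only [Equiv.symm_apply_apply]
    have : ∀ j : Fin (t + 1), (if (j : ℕ) < k then (k : ℝ)⁻¹ else 0) * ztil t z (σ j)
        = (k : ℝ)⁻¹ * (if (j : ℕ) < k then ztil t z (σ j) else 0) := by
      intro j; split_ifs <;> simp
    simp only [this]
    rw [← Finset.mul_sum]
    field_simp

/-- If `lam` separates the first `k` entries of `w` from the others and
`∑_{j < k} w j - k * lam = 1`, then `1 + lam` bounds the objective on the simplex. -/
lemma objective_le (n k : ℕ) (hk : k ≤ n) (w q : Fin n → ℝ) (lam M : ℝ)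
    (hlam : (∑ j : Fin n, if (j : ℕ) < k then w j else 0) - k * lam = 1)
    (hlt : ∀ j : Fin n, (j : ℕ) < k → lam ≤ w j)
    (hge : ∀ j : Fin n, k ≤ (j : ℕ) → w j ≤ lam)
    (hq : ∀ j, 0 ≤ q j) (hqM : ∀ j, q j ≤ M) (hq1 : ∑ j, q j = 1) :
    (1 - M) + ∑ j, q j * w j ≤ 1 + lam := by
  have h1 : ∑ j, q j * w j = lam + ∑ j, q j * (w j - lam) := by
    simp only [mul_sub, Finset.sum_sub_distrib, ← Finset.sum_mul, hq1]
    ring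
  have h2 : ∑ j, q j * (w j - lam)
      ≤ ∑ j : Fin n, M * ((if (j : ℕ) < k then w j else 0) - if (j : ℕ) < k then lam else 0) := by
    refine Finset.sum_le_sum fun j _ => ?_
    split_ifs with h
    · exact mul_le_mul_of_nonneg_right (hqM j) (sub_nonneg.2 (hlt j h))
    · have := mul_nonneg (hq j) (sub_nonneg.2 (hge j (not_lt.1 h)))
      linarith
  rw [← Finset.mul_sum, Finset.sum_sub_distrib, sum_ite_lt_const _ _ hk, hlam] at h2
  linarith

/-- **Closed form of the 0-1 loss conjugate `F_θ`.**
Let `z ∈ ℝ^t`, `z̃ = (z,0) ∈ ℝ^{t+1}`, and let `σ` be a permutation sorting `z̃` in descending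
order, so `z̃_{(j)} = z̃(σ j)` (0-indexed: `z̃_{(j+1)} = ztil t z (σ j)`). Let `kmax` be the
largest `k ∈ {1,…,t+1}` with `∑_{i=1}^k (z̃_{(i)} − z̃_{(k)}) < 1`. Then
`max_{p ∈ Δ^{t+1}} ((1 − max_i p_i) + ∑_{i=1}^t p_i z_i)
  = max_{1≤k≤t+1} (k − 1 + ∑_{j=1}^k z̃_{(j)})/k`,
and the maximum over `k` is attained at `kmax`. -/
theorem zeroOne_conjugate_closed_form (t : ℕ) (ht : 1 ≤ t) (z : Fin t → ℝ)
    (σ : Equiv.Perm (Fin (t + 1)))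
    (hσ : Antitone fun j => ztil t z (σ j))
    (kmax : ℕ) (hk1 : 1 ≤ kmax) (hk2 : kmax ≤ t + 1)
    (hkc : (∑ j : Fin (t + 1), if (j : ℕ) < kmax then ztil t z (σ j) else 0)
        - kmax * ztil t z (σ ⟨kmax - 1, by omega⟩) < 1)
    (hkl : ∀ k : ℕ, 1 ≤ k → ∀ hk : k ≤ t + 1,
      ((∑ j : Fin (t + 1), if (j : ℕ) < k then ztil t z (σ j) else 0)
        - k * ztil t z (σ ⟨k - 1, by omega⟩) < 1) → k ≤ kmax) :
    (∀ p : Fin (t + 1) → ℝ, (∀ i, 0 ≤ p i) → ∑ i, p i = 1 →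
      (1 - ⨆ i, p i) + ∑ i : Fin t, p i.castSucc * z i
        ≤ ((kmax : ℝ) - 1
            + ∑ j : Fin (t + 1), if (j : ℕ) < kmax then ztil t z (σ j) else 0) / kmax) ∧
    (∃ p : Fin (t + 1) → ℝ, (∀ i, 0 ≤ p i) ∧ (∑ i, p i = 1) ∧
      (1 - ⨆ i, p i) + ∑ i : Fin t, p i.castSucc * z i
        = ((kmax : ℝ) - 1
            + ∑ j : Fin (t + 1), if (j : ℕ) < kmax then ztil t z (σ j) else 0) / kmax) ∧
    (∀ k : ℕ, 1 ≤ k → k ≤ t + 1 →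
      ((k : ℝ) - 1 + ∑ j : Fin (t + 1), if (j : ℕ) < k then ztil t z (σ j) else 0) / k
        ≤ ((kmax : ℝ) - 1
            + ∑ j : Fin (t + 1), if (j : ℕ) < kmax then ztil t z (σ j) else 0) / kmax) := by
  have hK0 : (0 : ℝ) < kmax := by exact_mod_cast hk1
  have upper : ∀ p : Fin (t + 1) → ℝ, (∀ i, 0 ≤ p i) → ∑ i, p i = 1 →
      (1 - ⨆ i, p i) + ∑ i : Fin t, p i.castSucc * z i
        ≤ ((kmax : ℝ) - 1
            + ∑ j : Fin (t + 1), if (j : ℕ) < kmax then ztil t z (σ j) else 0) / kmax := by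
    intro p hp hp1
    rw [sum_castSucc_mul_eq t z σ]
    set S := ∑ j : Fin (t + 1), if (j : ℕ) < kmax then ztil t z (σ j) else 0 with hS
    have hval : ((kmax : ℝ) - 1 + S) / kmax = 1 + (S - 1) / kmax := by
      field_simp
      ring
    rw [hval]
    refine objective_le (t + 1) kmax hk2 (fun j => ztil t z (σ j)) (fun j => p (σ j)) _ _
      ?_ ?_ ?_ (fun j => hp _)
      (fun j => le_ciSup (Set.finite_range p).bddAbove (σ j)) ?_
    · rw [← hS]
      field_simp
      ring
    · intro j hj
      have hmono : ztil t z (σ ⟨kmax - 1, by omega⟩) ≤ ztil t z (σ j) :=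
        hσ (show j ≤ ⟨kmax - 1, by omega⟩ by rw [Fin.le_def]; dsimp only; omega)
      refine le_trans ?_ hmono
      rw [div_le_iff₀ hK0]
      linarith
    · intro j hj
      have hlt : kmax < t + 1 := lt_of_le_of_lt hj j.2
      have hmono : ztil t z (σ j) ≤ ztil t z (σ ⟨kmax, hlt⟩) :=
        hσ (show (⟨kmax, hlt⟩ : Fin (t + 1)) ≤ j from hj)
      refine le_trans hmono ?_
      -- The condition fails at `kmax + 1`, and there the last summand contributes zero.
      have hfail : ¬ _ := fun h => absurd (hkl (kmax + 1) (by omega) hlt h) (by omega)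
      rw [sum_ite_lt_succ (t + 1) kmax hlt (fun j => ztil t z (σ j)), ← hS] at hfail
      simp only [Nat.add_sub_cancel, not_lt] at hfail
      push_cast at hfail
      rw [le_div_iff₀ hK0]
      linarith
    · rw [← hp1]
      exact Equiv.sum_comp σ p
  refine ⟨upper, exists_uniform_top t z σ kmax hk1 hk2, fun k h1 h2 => ?_⟩
  obtain ⟨p, hp, hp1, hpv⟩ := exists_uniform_top t z σ k h1 h2
  exact hpv ▸ upper p hp hp1
end

section
/- (Subgradient of the 0-1 loss conjugate.) Let t ≥ 1, z ∈ ℝ^t, z̃ := (z, 0) ∈ ℝ^{t+1}, let σ be a permutation sorting z̃ in descending order, write z̃_{(j)} := z̃_{σ(j)} for the j-th largest coordinate of z̃, and let k_max be the largest k with Σ_{i=1}^k ( z̃_{(i)} − z̃_{(k)} ) < 1. Define u ∈ ℝ^t by u_i = 1/k_max if coordinate i of z̃ is among the k_max largest coordinates (under σ), and u_i = 0 otherwise. Then u is a subgradient of F_θ at z, where F_θ(z) = max_{1≤k≤t+1} ( k − 1 + Σ_{j=1}^k z̃_{(j)} ) / k; moreover, if k_max ≤ t and Σ_{i=1}^{k_max}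 ( z̃_{(i)} − z̃_{(k_max+1)} ) > 1, then F_θ is differentiable at z with ∇F_θ(z) = u. -/
/-!
`F01 t` is the maximum, over nonempty `S ⊆ {1,…,t+1}`, of the affine functions
`g_S(w) = (|S| - 1 + ∑_{i ∈ S} w̃_i) / |S|` (`affPiece`; see `affPiece_le_F01` and `F01_le`).
Let `S₀` be the set of the `kmax` largest coordinates of `z̃` and
`c = (∑_{i ∈ S₀} z̃_i - 1) / kmax = g_{S₀}(z) - 1`. The condition on `kmax` says that `z̃_i > c` on
`S₀`, and its maximality that `z̃_i ≤ c` off `S₀`. Since `g_S(z) ≤ 1 + c` is equivalent to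
`∑_{i ∈ S} (z̃_i - c) ≤ 1`, with equality for `S = S₀`, the piece `g_{S₀}` attains the maximum at
`z` (`affPiece_le_of_threshold`), so its gradient `u` is a subgradient. If `z̃_i < c` off `S₀`,
every other piece is strictly smaller at `z` (`affPiece_lt_of_threshold`). There are finitely many
pieces and they are continuous, so `F01 t` coincides with the affine function `g_{S₀}` near `z`.
-/

open Finset

/-- The sum of the `k` largest coordinates of `v ∈ ℝ^{t+1}`:
`topsum t v k = max { ∑_{i∈S} v_i : S ⊆ {1,…,t+1}, |S| = k }`. -/
noncomputable def topsum (t : ℕ) (v : Fin (t + 1) → ℝ) (k : ℕ) : ℝ :=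
  sSup {s | ∃ S : Finset (Fin (t + 1)), S.card = k ∧ s = ∑ i ∈ S, v i}

/-- The 0-1 loss conjugate
`F_θ(z) = max_{1≤k≤t+1} (k − 1 + ∑_{j=1}^k z̃_{(j)})/k`, where `∑_{j=1}^k z̃_{(j)}` is the sum of
the `k` largest coordinates of `z̃ = (z,0)`. -/
noncomputable def F01 (t : ℕ) (z : Fin t → ℝ) : ℝ :=
  sSup {v | ∃ k : ℕ, 1 ≤ k ∧ k ≤ t + 1 ∧ v = ((k : ℝ) - 1 + topsum t (ztil t z) k) / k}

/-- The affine piece `w ↦ (|S| - 1 + ∑_{i ∈ S} w̃_i) / |S|` of `F01 t` (meaningful for nonempty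
`S`). -/
noncomputable def affPiece (t : ℕ) (S : Finset (Fin (t + 1))) (w : Fin t → ℝ) : ℝ :=
  ((S.card : ℝ) - 1 + ∑ i ∈ S, ztil t w i) / S.card

theorem affPiece_le_F01 (t : ℕ) (S : Finset (Fin (t + 1))) (hS : S.Nonempty) (w : Fin t → ℝ) :
    affPiece t S w ≤ F01 t w := by
  have hcard : S.card ≤ t + 1 := by simpa using Finset.card_le_univ S
  have hbdd : BddAbove {v | ∃ k : ℕ, 1 ≤ k ∧ k ≤ t + 1 ∧
      v = ((k : ℝ) - 1 + topsum t (ztil t w) k) / k} := by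
    refine (((Set.finite_Iic (t + 1)).image
      fun k : ℕ => ((k : ℝ) - 1 + topsum t (ztil t w) k) / k).subset ?_).bddAbove
    rintro v ⟨k, -, hk, rfl⟩
    exact ⟨k, hk, rfl⟩
  have htop : ∑ i ∈ S, ztil t w i ≤ topsum t (ztil t w) S.card := by
    refine le_csSup ?_ ⟨S, rfl, rfl⟩
    refine ((Set.finite_range
      fun T : Finset (Fin (t + 1)) => ∑ i ∈ T, ztil t w i).subset ?_).bddAbove
    rintro s ⟨T, -, rfl⟩
    exact ⟨T, rfl⟩
  refine le_trans ?_ (le_csSup hbdd ⟨S.card, hS.card_pos, hcard, rfl⟩)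
  unfold affPiece
  gcongr

theorem F01_le (t : ℕ) (w : Fin t → ℝ) (b : ℝ)
    (h : ∀ S : Finset (Fin (t + 1)), S.Nonempty → affPiece t S w ≤ b) : F01 t w ≤ b := by
  refine csSup_le ⟨_, 1, le_rfl, by omega, rfl⟩ ?_
  rintro v ⟨k, hk1, hk2, rfl⟩
  have hk0 : (0 : ℝ) < k := by exact_mod_cast hk1
  have htop : topsum t (ztil t w) k ≤ b * k - (k - 1) := by
    obtain ⟨T, -, hT⟩ := Finset.exists_subset_card_eq
      (s := (Finset.univ : Finset (Fin (t + 1)))) (n := k) (by simpa using hk2)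
    refine csSup_le ⟨_, T, hT, rfl⟩ ?_
    rintro s ⟨S, hS, rfl⟩
    have hSb := h S (Finset.card_pos.mp (by omega))
    rw [affPiece, hS, div_le_iff₀ hk0] at hSb
    linarith
  rw [div_le_iff₀ hk0]
  linarith

theorem affPiece_eq_of_sum (t : ℕ) (S : Finset (Fin (t + 1))) (hS : S.Nonempty)
    (w : Fin t → ℝ) (c : ℝ) :
    affPiece t S w = 1 + c + (∑ i ∈ S, (ztil t w i - c) - 1) / S.card := by
  have h0 : (S.card : ℝ) ≠ 0 := by exact_mod_cast hS.card_pos.ne'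
  rw [affPiece, Finset.sum_sub_distrib, Finset.sum_const, nsmul_eq_mul]
  field_simp
  ring

/-- If the coordinates are above the threshold `c` exactly on `S₀`, then `S₀` maximizes
`∑_{i ∈ S} (z̃_i - c)`; when that maximum is `1`, `S₀` also maximizes the affine pieces. -/
theorem affPiece_le_of_threshold (t : ℕ) (S S₀ : Finset (Fin (t + 1))) (hS : S.Nonempty)
    (hS₀ : S₀.Nonempty) (z : Fin t → ℝ) (c : ℝ) (hc : ∑ i ∈ S₀, (ztil t z i - c) = 1)
    (hin : ∀ i ∈ S₀, c < ztil t z i) (hout : ∀ i ∉ S₀, ztil t z i ≤ c) :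
    affPiece t S z ≤ affPiece t S₀ z := by
  rw [affPiece_eq_of_sum t S hS z c, affPiece_eq_of_sum t S₀ hS₀ z c, hc, sub_self, zero_div]
  have hsum : ∑ i ∈ S, (ztil t z i - c) ≤ 1 := by
    rw [← hc, ← Finset.sum_inter_add_sum_sdiff S S₀]
    have h1 : ∑ i ∈ S ∩ S₀, (ztil t z i - c) ≤ ∑ i ∈ S₀, (ztil t z i - c) :=
      Finset.sum_le_sum_of_subset_of_nonneg Finset.inter_subset_right
        fun i hi _ => (sub_pos.mpr (hin i hi)).le
    have h2 : ∑ i ∈ S \ S₀, (ztil t z i - c) ≤ 0 :=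
      Finset.sum_nonpos fun i hi => sub_nonpos.mpr (hout i (Finset.mem_sdiff.mp hi).2)
    linarith
  have := div_nonpos_of_nonpos_of_nonneg (sub_nonpos.mpr hsum) (Nat.cast_nonneg (α := ℝ) S.card)
  linarith

theorem affPiece_lt_of_threshold (t : ℕ) (S S₀ : Finset (Fin (t + 1))) (hS : S.Nonempty)
    (hS₀ : S₀.Nonempty) (hne : S ≠ S₀) (z : Fin t → ℝ) (c : ℝ)
    (hc : ∑ i ∈ S₀, (ztil t z i - c) = 1)
    (hin : ∀ i ∈ S₀, c < ztil t z i) (hout : ∀ i ∉ S₀, ztil t z i < c) :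
    affPiece t S z < affPiece t S₀ z := by
  rw [affPiece_eq_of_sum t S hS z c, affPiece_eq_of_sum t S₀ hS₀ z c, hc, sub_self, zero_div]
  have hsum : ∑ i ∈ S, (ztil t z i - c) < 1 := by
    rw [← hc, ← Finset.sum_inter_add_sum_sdiff S S₀]
    have h1 : ∑ i ∈ S ∩ S₀, (ztil t z i - c) ≤ ∑ i ∈ S₀, (ztil t z i - c) :=
      Finset.sum_le_sum_of_subset_of_nonneg Finset.inter_subset_right
        fun i hi _ => (sub_pos.mpr (hin i hi)).le
    -- Either `S` has an element off `S₀`, or `S` misses an element of `S₀`.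
    rcases (S \ S₀).eq_empty_or_nonempty with he | hn
    · have hsub : S ⊆ S₀ := Finset.sdiff_eq_empty_iff_subset.mp he
      obtain ⟨i, hi, hiS⟩ := Finset.exists_of_ssubset (hsub.ssubset_of_ne hne)
      rw [he, Finset.sum_empty, add_zero, Finset.inter_eq_left.mpr hsub]
      exact Finset.sum_lt_sum_of_subset hsub hi hiS (sub_pos.mpr (hin i hi))
        fun j hj _ => (sub_pos.mpr (hin j hj)).le
    · have h2 : ∑ i ∈ S \ S₀, (ztil t z i - c) < 0 :=
        Finset.sum_neg (fun i hi => sub_neg.mpr (hout i (Finset.mem_sdiff.mp hi).2)) hn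
      linarith
  have := div_neg_of_neg_of_pos (sub_neg.mpr hsum)
    (Nat.cast_pos (α := ℝ).mpr hS.card_pos)
  linarith

theorem continuous_affPiece (t : ℕ) (S : Finset (Fin (t + 1))) : Continuous (affPiece t S) := by
  have h : ∀ i, Continuous fun w : Fin t → ℝ => ztil t w i := by
    intro i
    refine Fin.lastCases ?_ (fun j => ?_) i
    · simpa [ztil] using continuous_const
    · simpa [ztil] using continuous_apply j
  unfold affPiece
  exact (continuous_const.add (continuous_finsetSum S fun i _ => h i)).div_const _

/-- **Subgradient of the 0-1 loss conjugate.**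
Let `z ∈ ℝ^t`, `z̃ = (z,0)`, `σ` a permutation sorting `z̃` in descending order
(`z̃_{(j+1)} = ztil t z (σ j)`, 0-indexed), and `kmax` the largest `k` with
`∑_{i=1}^k (z̃_{(i)} − z̃_{(k)}) < 1`. Define `u ∈ ℝ^t` by `u_i = 1/kmax` if coordinate `i` of
`z̃` is among the `kmax` largest (i.e. `σ⁻¹(i) < kmax`), else `u_i = 0`. Then `u` is a
subgradient of `F01 t` at `z`; moreover if `∑_{i=1}^{kmax} (z̃_{(i)} − z̃_{(kmax+1)}) > 1`
(strict inequality, with `kmax ≤ t`), then `F01 t` is differentiable at `z` with gradient `u`. -/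
theorem zeroOne_conjugate_subgradient (t : ℕ) (ht : 1 ≤ t) (z : Fin t → ℝ)
    (σ : Equiv.Perm (Fin (t + 1)))
    (hσ : Antitone fun j => ztil t z (σ j))
    (kmax : ℕ) (hk1 : 1 ≤ kmax) (hk2 : kmax ≤ t + 1)
    (hkc : (∑ j : Fin (t + 1), if (j : ℕ) < kmax then ztil t z (σ j) else 0)
        - kmax * ztil t z (σ ⟨kmax - 1, by omega⟩) < 1)
    (hkl : ∀ k : ℕ, 1 ≤ k → ∀ hk : k ≤ t + 1,
      ((∑ j : Fin (t + 1), if (j : ℕ) < k then ztil t z (σ j) else 0)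
        - k * ztil t z (σ ⟨k - 1, by omega⟩) < 1) → k ≤ kmax)
    (u : Fin t → ℝ)
    (hu : ∀ i : Fin t,
      u i = if ((σ.symm i.castSucc : Fin (t + 1)) : ℕ) < kmax then (kmax : ℝ)⁻¹ else 0) :
    (∀ w : Fin t → ℝ, F01 t z + ∑ i, u i * (w i - z i) ≤ F01 t w) ∧
    (∀ hkt : kmax < t + 1,
      1 < (∑ j : Fin (t + 1), if (j : ℕ) < kmax then ztil t z (σ j) else 0)
            - kmax * ztil t z (σ ⟨kmax, hkt⟩) →
      DifferentiableAt ℝ (F01 t) z ∧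
      ∀ i : Fin t, fderiv ℝ (F01 t) z (Pi.single i 1) = u i) := by
  set S₀ : Finset (Fin (t + 1)) :=
    (Finset.univ.filter fun j : Fin (t + 1) => (j : ℕ) < kmax).map σ.toEmbedding with hS₀def
  have hmem : ∀ i, i ∈ S₀ ↔ ((σ.symm i : Fin (t + 1)) : ℕ) < kmax := by
    intro i
    simp [hS₀def, Finset.mem_map_equiv]
  have hcard : S₀.card = kmax := by
    rw [hS₀def, Finset.card_map, Fin.card_filter_val_lt]
    omega
  have hne : S₀.Nonempty := Finset.card_pos.mp (by omega)
  have hsumS : (∑ j : Fin (t + 1), if (j : ℕ) < kmax then ztil t z (σ j) else 0)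
      = ∑ i ∈ S₀, ztil t z i := by
    rw [hS₀def, Finset.sum_map, Finset.sum_filter]
    rfl
  rw [hsumS] at hkc
  have hK : (0 : ℝ) < kmax := by exact_mod_cast hk1
  obtain ⟨c, hcdef⟩ : ∃ c : ℝ, kmax * c = ∑ i ∈ S₀, ztil t z i - 1 :=
    ⟨(∑ i ∈ S₀, ztil t z i - 1) / kmax, by field_simp⟩
  have hc : ∑ i ∈ S₀, (ztil t z i - c) = 1 := by
    rw [Finset.sum_sub_distrib, Finset.sum_const, nsmul_eq_mul, hcard]
    linarith
  have hin : ∀ i ∈ S₀, c < ztil t z i := by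
    intro i hi
    have hi' := (hmem i).mp hi
    have h1 : ztil t z (σ ⟨kmax - 1, by omega⟩) ≤ ztil t z (σ (σ.symm i)) :=
      hσ (Fin.le_def.mpr (by simp only; omega))
    rw [Equiv.apply_symm_apply] at h1
    refine lt_of_lt_of_le (lt_of_mul_lt_mul_left ?_ hK.le) h1
    linarith
  have hafter : ∀ hkt : kmax < t + 1, ∀ i ∉ S₀, ztil t z i ≤ ztil t z (σ ⟨kmax, hkt⟩) := by
    intro hkt i hi
    have hi' := mt (hmem i).mpr hi
    have h1 : ztil t z (σ (σ.symm i)) ≤ ztil t z (σ ⟨kmax, hkt⟩) :=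
      hσ (Fin.le_def.mpr (by simp only; omega))
    rwa [Equiv.apply_symm_apply] at h1
  have hout : ∀ i ∉ S₀, ztil t z i ≤ c := by
    intro i hi
    have hi' := mt (hmem i).mpr hi
    have hkt : kmax < t + 1 := by have := (σ.symm i).isLt; omega
    refine (hafter hkt i hi).trans (le_of_mul_le_mul_left ?_ hK)
    by_contra hlt
    -- If `z̃_{(kmax+1)} > c`, then `kmax + 1` would satisfy the condition defining `kmax`.
    have hs : (∑ j : Fin (t + 1), if (j : ℕ) < kmax + 1 then ztil t z (σ j) else 0)
        = ∑ i ∈ S₀, ztil t z i + ztil t z (σ ⟨kmax, hkt⟩) := by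
      rw [← hsumS, ← Finset.sum_filter, ← Finset.sum_filter]
      have : (Finset.univ.filter fun j : Fin (t + 1) => (j : ℕ) < kmax + 1)
          = insert ⟨kmax, hkt⟩ (Finset.univ.filter fun j : Fin (t + 1) => (j : ℕ) < kmax) := by
        ext j
        simp only [Finset.mem_filter, Finset.mem_univ, true_and, Finset.mem_insert, Fin.ext_iff]
        omega
      rw [this, Finset.sum_insert (by simp), add_comm]
    have := hkl (kmax + 1) (by omega) hkt (by
      rw [hs]
      simp only [Nat.add_sub_cancel]
      push_cast
      linarith)
    omega
  have hFz : F01 t z = affPiece t S₀ z :=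
    le_antisymm
      (F01_le t z _ fun S hS => affPiece_le_of_threshold t S S₀ hS hne z c hc hin hout)
      (affPiece_le_F01 t S₀ hne z)
  have haff : ∀ w : Fin t → ℝ, affPiece t S₀ w = affPiece t S₀ z + ∑ i, u i * (w i - z i) := by
    intro w
    have hexp : ∀ v : Fin t → ℝ, ∑ i ∈ S₀, ztil t v i = kmax * ∑ i, u i * v i := by
      intro v
      rw [← Finset.sum_ite_mem_eq S₀, Fin.sum_univ_castSucc, Finset.mul_sum]
      have hlast : ztil t v (Fin.last t) = 0 := by simp [ztil]
      rw [hlast, ite_self, add_zero]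
      refine Finset.sum_congr rfl fun i _ => ?_
      have hi : ztil t v i.castSucc = v i := by simp [ztil]
      rw [hi, hu i]
      simp only [hmem]
      split_ifs
      · field_simp
      · simp
    have h1 : ∑ i, u i * (w i - z i) = ∑ i, u i * w i - ∑ i, u i * z i := by
      rw [← Finset.sum_sub_distrib]
      exact Finset.sum_congr rfl fun i _ => mul_sub _ _ _
    rw [affPiece, affPiece, hexp, hexp, h1, hcard]
    field_simp
    ring
  refine ⟨fun w => ?_, fun hkt hstrict => ?_⟩
  · rw [hFz, ← haff w]
    exact affPiece_le_F01 t S₀ hne w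
  · rw [hsumS] at hstrict
    have hout' : ∀ i ∉ S₀, ztil t z i < c := fun i hi =>
      (hafter hkt i hi).trans_lt (lt_of_mul_lt_mul_left (by linarith) hK.le)
    have hev : ∀ᶠ w in nhds z, ∀ S : Finset (Fin (t + 1)), S.Nonempty →
        affPiece t S w ≤ affPiece t S₀ w := by
      rw [Filter.eventually_all]
      intro S
      by_cases hS : S.Nonempty
      · by_cases hSS : S = S₀
        · exact Filter.Eventually.of_forall fun w _ => by rw [hSS]
        · have hlt := affPiece_lt_of_threshold t S S₀ hS hne hSS z c hc hin hout'
          filter_upwards [(continuous_affPiece t S).continuousAt.eventually_lt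
            (continuous_affPiece t S₀).continuousAt hlt] with w hw _ using hw.le
      · exact Filter.Eventually.of_forall fun w h => absurd h hS
    have heq : F01 t =ᶠ[nhds z] fun w => affPiece t S₀ z + ∑ i, u i * (w i - z i) := by
      filter_upwards [hev] with w hw
      rw [← haff w]
      exact le_antisymm (F01_le t w _ hw) (affPiece_le_F01 t S₀ hne w)
    have hder : HasFDerivAt (fun w : Fin t → ℝ => affPiece t S₀ z + ∑ i, u i * (w i - z i))
        (∑ i, u i • ContinuousLinearMap.proj (R := ℝ) (φ := fun _ : Fin t => ℝ) i) z := by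
      refine HasFDerivAt.const_add _ (HasFDerivAt.fun_sum fun i _ => ?_)
      exact ((hasFDerivAt_apply i z).sub_const (z i)).const_mul (u i)
    have hF := hder.congr_of_eventuallyEq heq
    refine ⟨hF.differentiableAt, fun i => ?_⟩
    rw [hF.fderiv]
    simp [Pi.single_apply]
end

section
/- (Optimal randomized loss vector for the 0-1 minimax problem.) Let t ≥ 1, z ∈ ℝ^t, z̃ := (z,0) ∈ ℝ^{t+1} with descending order statistics z̃_{(1)} ≥ … ≥ z̃_{(t+1)}, k_max the largest k with Σ_{i=1}^k(z̃_{(i)} − z̃_{(k)}) < 1, and V := ( k_max − 1 + Σ_{i=1}^{k_max} z̃_{(i)} ) / k_max. Define L* ∈ ℝ^{t+1} by assigning, to the coordinate holding the j-th largest value z̃_{(j)}: L* = V − z̃_{(j)} if j ≤ k_max, and L* = 1 if j > k_max. Then L* is feasible, i.e., 0 ≤ L*_i ≤ 1 for all i and Σ_{i=1}^{t+1} L*_i = t, and it attains the minimum: max_{1≤i≤t+1} ( z̃_i + L*_i ) = V = min over all L ∈ ℝ^{t+1} with 0 ≤ L_i ≤ 1 and Σ_i L_i = t of max_{1≤i≤t+1}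 ( z̃_i + L_i ). -/
/-!
Write `a j = z̃ (σ j)` for the sorted values, `k = kmax` and `S = ∑_{j < k} a j`, so that
`k V = k - 1 + S`. The defining inequality of `kmax` says `V - a (k-1) < 1`, and maximality says
`1 + a k ≤ V` when `k ≤ t`. Hence `V - a j < 1` on the top `k` coordinates, and `z̃ + L* ≤ V`
everywhere. Nonnegativity of `V - a 0` holds because each gap `a 0 - a j` with `j < k` is at most
`1`, and it is `0` for `j = 0`, so the gaps sum to at most `k - 1`.
For the lower bound, a feasible `L` has mass at least `t - (t + 1 - k) = k - 1` on the top `k`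
coordinates, so the average of `z̃ + L` over them is at least `V`, and so is the maximum.
-/

open Finset

/-- **Optimal randomized loss vector for the 0-1 minimax problem.**
Let `z ∈ ℝ^t`, `z̃ = (z,0) ∈ ℝ^{t+1}` with descending order statistics given by a sorting
permutation `σ` (`z̃_{(j+1)} = ztil t z (σ j)`, 0-indexed), `kmax` the largest `k` with
`∑_{i=1}^k (z̃_{(i)} − z̃_{(k)}) < 1`, and `V = (kmax − 1 + ∑_{i=1}^{kmax} z̃_{(i)})/kmax`.
Define `L*` by `L*_i = V − z̃_i` if the coordinate `i` is among the `kmax` largest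
(i.e. `σ⁻¹(i) < kmax`), and `L*_i = 1` otherwise. Then `L*` is feasible
(`0 ≤ L*_i ≤ 1`, `∑ L*_i = t`) and attains the minimum:
`max_i (z̃_i + L*_i) = V = min { max_i (z̃_i + L_i) : 0 ≤ L_i ≤ 1, ∑ L_i = t }`. -/
theorem zeroOne_optimal_loss_vector (t : ℕ) (ht : 1 ≤ t) (z : Fin t → ℝ)
    (σ : Equiv.Perm (Fin (t + 1)))
    (hσ : Antitone fun j => ztil t z (σ j))
    (kmax : ℕ) (hk1 : 1 ≤ kmax) (hk2 : kmax ≤ t + 1)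
    (hkc : (∑ j : Fin (t + 1), if (j : ℕ) < kmax then ztil t z (σ j) else 0)
        - kmax * ztil t z (σ ⟨kmax - 1, by omega⟩) < 1)
    (hkl : ∀ k : ℕ, 1 ≤ k → ∀ hk : k ≤ t + 1,
      ((∑ j : Fin (t + 1), if (j : ℕ) < k then ztil t z (σ j) else 0)
        - k * ztil t z (σ ⟨k - 1, by omega⟩) < 1) → k ≤ kmax)
    (V : ℝ)
    (hV : V = ((kmax : ℝ) - 1
        + ∑ j : Fin (t + 1), if (j : ℕ) < kmax then ztil t z (σ j) else 0) / kmax)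
    (Lstar : Fin (t + 1) → ℝ)
    (hLstar : ∀ i : Fin (t + 1),
      Lstar i = if ((σ.symm i : Fin (t + 1)) : ℕ) < kmax then V - ztil t z i else 1) :
    (∀ i, 0 ≤ Lstar i ∧ Lstar i ≤ 1) ∧ (∑ i, Lstar i = t) ∧
    (⨆ i, (ztil t z i + Lstar i)) = V ∧
    (∀ Lv : Fin (t + 1) → ℝ, (∀ i, 0 ≤ Lv i ∧ Lv i ≤ 1) → (∑ i, Lv i = t) →
      V ≤ ⨆ i, (ztil t z i + Lv i)) := by
  set a : Fin (t + 1) → ℝ := fun j => ztil t z (σ j) with ha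
  set s : Finset (Fin (t + 1)) := univ.filter (fun j => (j : ℕ) < kmax) with hs
  have hmem : ∀ j, j ∈ s ↔ (j : ℕ) < kmax := by simp [hs]
  have hcard : (s.card : ℝ) = kmax := by
    rw [hs, Fin.card_filter_val_lt, min_eq_right hk2]
  have hcard' : (sᶜ.card : ℝ) = t + 1 - kmax := by
    have h := s.card_add_card_compl
    rw [Fintype.card_fin] at h
    have h' : (s.card : ℝ) + (sᶜ.card : ℝ) = (t : ℝ) + 1 := by exact_mod_cast h
    linarith
  have hkpos : (0 : ℝ) < kmax := by exact_mod_cast hk1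
  have hsum : (∑ j : Fin (t + 1), if (j : ℕ) < kmax then ztil t z (σ j) else 0)
      = ∑ j ∈ s, a j := by
    rw [hs, sum_filter]
  rw [hsum] at hkc hV
  set S := ∑ j ∈ s, a j with hS
  have hkV : (kmax : ℝ) * V = kmax - 1 + S := by
    rw [hV]; field_simp
  set p : Fin (t + 1) := ⟨kmax - 1, by omega⟩ with hp
  have hpa : S - kmax * a p < 1 := hkc
  have hlast : ∀ j ∈ s, a p ≤ a j := fun j hj =>
    hσ (Fin.le_def.2 (by have := (hmem j).1 hj; simp only [hp]; omega))
  have hVp : V - a p < 1 := by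
    by_contra! h
    nlinarith
  have h0s : (0 : Fin (t + 1)) ∈ s := (hmem 0).2 hk1
  have hgap : a 0 - a p < 1 := by
    have h : a 0 - a p ≤ ∑ j ∈ s, (a j - a p) :=
      single_le_sum (f := fun j => a j - a p) (fun j hj => sub_nonneg.2 (hlast j hj)) h0s
    rw [sum_sub_distrib, sum_const, nsmul_eq_mul, hcard] at h
    linarith
  have hV0 : a 0 ≤ V := by
    have h : ∑ j ∈ s.erase 0, (a 0 - a j) ≤ ∑ j ∈ s.erase 0, (1 : ℝ) :=
      sum_le_sum fun j hj => by have := hlast j (mem_of_mem_erase hj); linarith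
    have e1 := add_sum_erase s (fun j => a 0 - a j) h0s
    have e2 := add_sum_erase s (fun _ => (1 : ℝ)) h0s
    simp only [sum_sub_distrib, sum_const, nsmul_eq_mul, hcard, mul_one] at e1 e2 h
    by_contra! h'
    nlinarith
  have hout : ∀ j, j ∉ s → a j + 1 ≤ V := by
    intro j hj
    have hjk : kmax ≤ (j : ℕ) := by simpa [hmem] using hj
    have hkt : kmax < t + 1 := lt_of_le_of_lt hjk j.2
    set q : Fin (t + 1) := ⟨kmax, hkt⟩ with hq
    have hqj : a j ≤ a q := hσ (Fin.le_def.2 hjk)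
    have hqs : q ∉ s := by simp [hmem, hq]
    have hsplit : (∑ j : Fin (t + 1), if (j : ℕ) < kmax + 1 then ztil t z (σ j) else 0)
        = a q + S := by
      rw [hS, ← sum_insert hqs, ← sum_filter]
      refine sum_congr ?_ fun _ _ => rfl
      ext i
      simp only [mem_filter, mem_univ, true_and, mem_insert, hmem, hq, Fin.ext_iff]
      omega
    have hnot : ¬ (a q + S - ((kmax + 1 : ℕ) : ℝ) * a q < 1) := by
      intro h
      have := hkl (kmax + 1) (by omega) (by omega) (by rw [hsplit]; exact h)
      omega
    push_cast at hnot
    by_contra! h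
    nlinarith
  have hLs : ∀ j, Lstar (σ j) = if j ∈ s then V - a j else 1 := by
    intro j
    simp [hLstar, hmem, ha]
  have hbound : ∀ i, ztil t z i + Lstar i ≤ V := by
    intro i
    obtain ⟨j, rfl⟩ := σ.surjective i
    rw [hLs]
    split_ifs with h
    · exact (add_sub_cancel (a j) V).le
    · exact hout j h
  refine ⟨?_, ?_, ?_, ?_⟩
  · intro i
    obtain ⟨j, rfl⟩ := σ.surjective i
    rw [hLs]
    split_ifs with h
    · have h1 := hlast j h
      have h2 : a j ≤ a 0 := hσ (Fin.zero_le j)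
      constructor <;> linarith
    · norm_num
  · rw [← Equiv.sum_comp σ, ← sum_add_sum_compl s,
      sum_congr rfl (fun j hj => by rw [hLs, if_pos hj] : ∀ j ∈ s, Lstar (σ j) = V - a j),
      sum_congr rfl (fun j hj => by rw [hLs, if_neg (mem_compl.1 hj)] :
        ∀ j ∈ sᶜ, Lstar (σ j) = 1)]
    simp only [sum_sub_distrib, sum_const, nsmul_eq_mul, hcard, hcard', mul_one]
    linarith
  · refine le_antisymm (ciSup_le hbound) ?_
    have h := le_ciSup (f := fun i => ztil t z i + Lstar i) (Set.finite_range _).bddAbove (σ 0)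
    simp only [hLs, if_pos h0s] at h
    exact (add_sub_cancel (a 0) V).ge.trans h
  · intro Lv hLv hLsum
    set M := ⨆ i, (ztil t z i + Lv i) with hM
    have hle : ∑ j ∈ s, (a j + Lv (σ j)) ≤ ∑ j ∈ s, M := sum_le_sum fun j _ =>
      le_ciSup (f := fun i => ztil t z i + Lv i) (Set.finite_range _).bddAbove (σ j)
    have hrest : ∑ j ∈ sᶜ, Lv (σ j) ≤ ∑ j ∈ sᶜ, (1 : ℝ) := sum_le_sum fun j _ => (hLv _).2
    rw [← Equiv.sum_comp σ, ← sum_add_sum_compl s] at hLsum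
    simp only [sum_add_distrib, sum_const, nsmul_eq_mul, hcard, hcard', mul_one] at hle hrest
    by_contra! h
    nlinarith
end

section
/- (Huber function as the restricted quadratic-loss conjugate.) Fix ρ > 0 and let 𝒫 be the set of distributions P of a real random variable Y with E[Y²] ≤ ρ². Then for every z ∈ ℝ: sup_{P ∈ 𝒫} ( Var(Y) + z·E[Y] ) = ρ² + z²/4 if |z| ≤ 2ρ, and = ρ|z| if |z| > 2ρ. Moreover, any maximizing distribution satisfies E[Y²] = ρ², and the supremum equals max_{|m| ≤ ρ} ( ρ² − m² + z m ). Consequently the derivative of this function of z equals −ρ for z ≤ −2ρ, z/2 for −2ρ < z ≤ 2ρ, and ρ for z > 2ρ. -/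
/-!
A law with second moment `s ≤ ρ²` and mean `m` contributes `s - m² + z m`, and `m² ≤ s`; conversely
every `m` with `|m| ≤ ρ` is the mean of a law on `{-ρ, ρ}`, whose second moment is `ρ²`
(`exists_twoPoint`). Hence the conjugate is the maximum of the concave quadratic
`m ↦ ρ² - m² + z m` over `[-ρ, ρ]` (`isGreatest_huber`).

A point `c` of `[-ρ, ρ]` satisfying the variational inequality `(z - 2c)(m - c) ≤ 0` for all
`m ∈ [-ρ, ρ]` is the maximizer, with the quadratic gap
`ρ² - m² + z m ≤ ρ² - c² + z c - (m - c)²`. The gap gives the envelope estimate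
`0 ≤ F(w) - F(z) - c (w - z) ≤ (w - z)² / 4`, so `F'(z) = c` at every `z`, including the
break points `±2ρ`. The three regimes are `c = -ρ`, `c = z / 2` and `c = ρ`.
-/

open MeasureTheory

/-- The restricted quadratic-loss conjugate:
`F_θ(z) = sup { Var(Y) + z·E[Y] : laws of Y with E[Y²] ≤ ρ² }`. -/
noncomputable def huberSup (ρ : ℝ) (z : ℝ) : ℝ :=
  sSup {v | ∃ μ : Measure ℝ, IsProbabilityMeasure μ ∧ Integrable (fun y => y ^ 2) μ ∧
    (∫ y, y ^ 2 ∂μ) ≤ ρ ^ 2 ∧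
    v = ((∫ y, y ^ 2 ∂μ) - (∫ y, y ∂μ) ^ 2) + z * ∫ y, y ∂μ}

lemma sq_mean_le (μ : Measure ℝ) [IsProbabilityMeasure μ] (h : Integrable (fun y => y ^ 2) μ) :
    (∫ y, y ∂μ) ^ 2 ≤ ∫ y, y ^ 2 ∂μ := by
  have hL : MemLp (fun y : ℝ => y) 2 μ :=
    (memLp_two_iff_integrable_sq (by fun_prop)).2 h
  have hv := ProbabilityTheory.variance_nonneg (fun y : ℝ => y) μ
  rw [ProbabilityTheory.variance_eq_sub hL] at hv
  simpa using hv

/-- Every `m ∈ [-ρ, ρ]` is the mean of a law on `{-ρ, ρ}`; its second moment is `ρ²`. -/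
lemma exists_twoPoint {ρ : ℝ} (hρ : 0 < ρ) {m : ℝ} (hm : |m| ≤ ρ) :
    ∃ μ : Measure ℝ, IsProbabilityMeasure μ ∧ Integrable (fun y => y ^ 2) μ ∧
      (∫ y, y ^ 2 ∂μ) = ρ ^ 2 ∧ (∫ y, y ∂μ) = m := by
  obtain ⟨h1, h2⟩ := abs_le.1 hm
  -- `a` solves `a * ρ + (1 - a) * (-ρ) = m`
  obtain ⟨a, ha⟩ : ∃ a : ℝ, a = (ρ + m) / (2 * ρ) := ⟨_, rfl⟩
  have ha0 : 0 ≤ a := by rw [ha]; apply div_nonneg <;> linarith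
  have ha1 : 0 ≤ 1 - a := by
    rw [ha, sub_nonneg, div_le_one (by linarith)]; linarith
  have ham : 2 * ρ * a = ρ + m := by rw [ha]; field_simp
  have hint (f : ℝ → ℝ) (b x : ℝ) : Integrable f (ENNReal.ofReal b • Measure.dirac x) :=
    (integrable_dirac (by simp)).smul_measure ENNReal.ofReal_ne_top
  have key (f : ℝ → ℝ) : ∫ y, f y ∂(ENNReal.ofReal a • Measure.dirac ρ +
      ENNReal.ofReal (1 - a) • Measure.dirac (-ρ)) = a * f ρ + (1 - a) * f (-ρ) := by
    rw [integral_add_measure (hint _ _ _) (hint _ _ _), integral_smul_measure,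
      integral_smul_measure, integral_dirac, integral_dirac, ENNReal.toReal_ofReal ha0,
      ENNReal.toReal_ofReal ha1, smul_eq_mul, smul_eq_mul]
  refine ⟨_, ⟨?_⟩, (hint _ a ρ).add_measure (hint _ (1 - a) (-ρ)), ?_, ?_⟩
  · simp [← ENNReal.ofReal_add ha0 ha1]
  · rw [key]; ring
  · rw [key]; linarith

/-- The variational inequality characterizing `c` as the maximizer of `m ↦ ρ² - m² + z m` over
`[-ρ, ρ]`: the derivative `z - 2c` is nonpositive along every feasible direction `m - c`. -/
def HuberOpt (ρ z c : ℝ) : Prop :=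
  |c| ≤ ρ ∧ ∀ m : ℝ, |m| ≤ ρ → (z - 2 * c) * (m - c) ≤ 0

lemma huberOpt_left {ρ z : ℝ} (hρ : 0 < ρ) (hz : z ≤ -(2 * ρ)) : HuberOpt ρ z (-ρ) := by
  refine ⟨by rw [abs_neg, abs_of_pos hρ], fun m hm => ?_⟩
  have := abs_le.1 hm
  exact mul_nonpos_of_nonpos_of_nonneg (by linarith) (by linarith)

lemma huberOpt_mid {ρ z : ℝ} (hz : |z| ≤ 2 * ρ) : HuberOpt ρ z (z / 2) := by
  have := abs_le.1 hz
  refine ⟨abs_le.2 ⟨by linarith, by linarith⟩, fun m _ => le_of_eq (by ring)⟩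

lemma huberOpt_right {ρ z : ℝ} (hρ : 0 < ρ) (hz : 2 * ρ ≤ z) : HuberOpt ρ z ρ := by
  refine ⟨by rw [abs_of_pos hρ], fun m hm => ?_⟩
  have := abs_le.1 hm
  exact mul_nonpos_of_nonneg_of_nonpos (by linarith) (by linarith)

lemma exists_huberOpt {ρ : ℝ} (hρ : 0 < ρ) (z : ℝ) : ∃ c, HuberOpt ρ z c := by
  rcases le_total z (-(2 * ρ)) with h | h
  · exact ⟨_, huberOpt_left hρ h⟩
  rcases le_total z (2 * ρ) with h' | h'
  · exact ⟨_, huberOpt_mid (abs_le.2 ⟨h, h'⟩)⟩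
  · exact ⟨_, huberOpt_right hρ h'⟩

lemma HuberOpt.gap {ρ z c m : ℝ} (hc : HuberOpt ρ z c) (hm : |m| ≤ ρ) :
    ρ ^ 2 - m ^ 2 + z * m ≤ ρ ^ 2 - c ^ 2 + z * c - (m - c) ^ 2 := by
  nlinarith [hc.2 m hm]

lemma abs_mean_le {ρ : ℝ} (hρ : 0 < ρ) (μ : Measure ℝ) [IsProbabilityMeasure μ]
    (h : Integrable (fun y => y ^ 2) μ) (hb : (∫ y, y ^ 2 ∂μ) ≤ ρ ^ 2) :
    |∫ y, y ∂μ| ≤ ρ :=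
  abs_le_of_sq_le_sq ((sq_mean_le μ h).trans hb) hρ.le

lemma isGreatest_huber {ρ z c : ℝ} (hρ : 0 < ρ) (hc : HuberOpt ρ z c) :
    IsGreatest {v | ∃ μ : Measure ℝ, IsProbabilityMeasure μ ∧ Integrable (fun y => y ^ 2) μ ∧
      (∫ y, y ^ 2 ∂μ) ≤ ρ ^ 2 ∧
      v = ((∫ y, y ^ 2 ∂μ) - (∫ y, y ∂μ) ^ 2) + z * ∫ y, y ∂μ} (ρ ^ 2 - c ^ 2 + z * c) := by
  constructor
  · obtain ⟨μ, hμ, hi, h2, h1⟩ := exists_twoPoint hρ hc.1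
    exact ⟨μ, hμ, hi, h2.le, by rw [h2, h1]⟩
  · rintro v ⟨μ, hμ, hi, hb, rfl⟩
    have := hc.gap (abs_mean_le hρ μ hi hb)
    nlinarith [sq_nonneg ((∫ y, y ∂μ) - c)]

lemma HuberOpt.huberSup_eq {ρ z c : ℝ} (hρ : 0 < ρ) (hc : HuberOpt ρ z c) :
    huberSup ρ z = ρ ^ 2 - c ^ 2 + z * c :=
  (isGreatest_huber hρ hc).csSup_eq

lemma le_huberSup {ρ z m : ℝ} (hρ : 0 < ρ) (hm : |m| ≤ ρ) :
    ρ ^ 2 - m ^ 2 + z * m ≤ huberSup ρ z := by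
  obtain ⟨c, hc⟩ := exists_huberOpt hρ z
  rw [hc.huberSup_eq hρ]
  nlinarith [hc.gap hm, sq_nonneg (m - c)]

/-- Envelope theorem: the derivative of the conjugate at `z` is the maximizing mean. -/
lemma HuberOpt.hasDerivAt {ρ z c : ℝ} (hρ : 0 < ρ) (hc : HuberOpt ρ z c) :
    HasDerivAt (huberSup ρ) c z := by
  have hbound (w : ℝ) : ‖huberSup ρ w - huberSup ρ z - (w - z) • c‖ ≤ 1 / 4 * ‖(w - z) ^ 2‖ := by
    have hlow := le_huberSup (z := w) hρ hc.1
    obtain ⟨d, hd⟩ := exists_huberOpt hρ w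
    have hgap := hc.gap hd.1
    rw [hd.huberSup_eq hρ] at hlow ⊢
    rw [hc.huberSup_eq hρ, Real.norm_eq_abs, Real.norm_eq_abs, abs_of_nonneg (sq_nonneg (w - z)),
      smul_eq_mul, abs_le]
    -- the upper bound is `(w - z)(d - c) - (d - c)² ≤ (w - z)² / 4`
    constructor <;> nlinarith [sq_nonneg ((w - z) / 2 - (d - c)), sq_nonneg (w - z)]
  rw [hasDerivAt_iff_isLittleO]
  exact (Asymptotics.IsBigO.of_bound _ (Filter.Eventually.of_forall hbound)).trans_isLittleO
    (by simpa using Asymptotics.isLittleO_pow_sub_sub z one_lt_two)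

/-- **Huber function as the restricted quadratic-loss conjugate.**
Fix `ρ > 0` and let `𝒫` be the set of laws of a real `Y` with `E[Y²] ≤ ρ²`. Then
`sup_{P∈𝒫} (Var(Y) + z·E[Y])` equals `ρ² + z²/4` if `|z| ≤ 2ρ` and `ρ|z|` if `|z| > 2ρ`;
every maximizing distribution has `E[Y²] = ρ²`; the supremum equals
`max_{|m|≤ρ} (ρ² − m² + z m)`; and the derivative in `z` is `−ρ` for `z ≤ −2ρ`, `z/2` for
`−2ρ < z ≤ 2ρ`, and `ρ` for `z > 2ρ`. -/
theorem huber_conjugate (ρ : ℝ) (hρ : 0 < ρ) :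
    (∀ z : ℝ, |z| ≤ 2 * ρ → huberSup ρ z = ρ ^ 2 + z ^ 2 / 4) ∧
    (∀ z : ℝ, 2 * ρ < |z| → huberSup ρ z = ρ * |z|) ∧
    (∀ (z : ℝ) (μ : Measure ℝ), IsProbabilityMeasure μ →
      Integrable (fun y => y ^ 2) μ → (∫ y, y ^ 2 ∂μ) ≤ ρ ^ 2 →
      ((∫ y, y ^ 2 ∂μ) - (∫ y, y ∂μ) ^ 2) + z * (∫ y, y ∂μ) = huberSup ρ z →
      (∫ y, y ^ 2 ∂μ) = ρ ^ 2) ∧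
    (∀ z : ℝ, huberSup ρ z = ⨆ m : {m : ℝ // |m| ≤ ρ}, (ρ ^ 2 - (m : ℝ) ^ 2 + z * m)) ∧
    (∀ z : ℝ, z ≤ -(2 * ρ) → HasDerivAt (huberSup ρ) (-ρ) z) ∧
    (∀ z : ℝ, -(2 * ρ) < z → z ≤ 2 * ρ → HasDerivAt (huberSup ρ) (z / 2) z) ∧
    (∀ z : ℝ, 2 * ρ < z → HasDerivAt (huberSup ρ) ρ z) := by
  refine ⟨fun z hz => ?_, fun z hz => ?_, fun z μ hμ hi hb heq => ?_, fun z => ?_,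
    fun z hz => (huberOpt_left hρ hz).hasDerivAt hρ,
    fun z hz hz' => (huberOpt_mid (abs_le.2 ⟨hz.le, hz'⟩)).hasDerivAt hρ,
    fun z hz => (huberOpt_right hρ hz.le).hasDerivAt hρ⟩
  · rw [(huberOpt_mid hz).huberSup_eq hρ]; ring
  · rcases lt_abs.1 hz with h | h
    · rw [(huberOpt_right hρ h.le).huberSup_eq hρ, abs_of_pos (by linarith)]; ring
    · rw [(huberOpt_left hρ (by linarith)).huberSup_eq hρ, abs_of_neg (by linarith)]; ring
  · -- raising the second moment to `ρ²` while keeping the mean cannot improve on a maximizer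
    have := le_huberSup (z := z) hρ (abs_mean_le hρ μ hi hb)
    linarith
  · obtain ⟨c, hc⟩ := exists_huberOpt hρ z
    have hmax : IsGreatest (Set.range fun m : {m : ℝ // |m| ≤ ρ} =>
        ρ ^ 2 - (m : ℝ) ^ 2 + z * m) (huberSup ρ z) := by
      refine ⟨⟨⟨c, hc.1⟩, (hc.huberSup_eq hρ).symm⟩, ?_⟩
      rintro _ ⟨m, rfl⟩
      exact le_huberSup hρ m.2
    exact hmax.csSup_eq.symm
end
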